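/- Let φ be an invertible RDS on 𝕊¹ with ℙ(Ω_c)=1, and let r̃:Ω_c→𝕊¹ denote the crack-point map. Then either (a) for every x∈𝕊¹, ℙ(ω∈Ω_c : r̃(ω)=x)=0, or (b) there exists a deterministic fixed point p∈𝕊¹ such that ℙ(ω∈Ω_c : r̃(ω)=p)=1. -/

import Mathlib

open MeasureTheory Filter Topology Set ENNReal

noncomputable section

/-- The natural projection `π : ℝ → 𝕊¹ = ℝ/ℤ`. -/
def circleProj (x : ℝ) : UnitAddCircle := (x : UnitAddCircle)

/-- `f` is an orientation-preserving homeomorphism of the circle: it admits a strictly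
monotone degree-one lift. -/
def OrientPreserving (f : UnitAddCircle ≃ₜ UnitAddCircle) : Prop :=
  ∃ F : ℝ → ℝ, StrictMono F ∧ (∀ x : ℝ, F (x + 1) = F x + 1) ∧
    ∀ x : ℝ, f (circleProj x) = circleProj (F x)

/-- The anticlockwise distance `d₊(x,y) = min {r ≥ 0 : π(x' + r) = y}` (`x'` any lift of `x`). -/
def dPlus (x y : UnitAddCircle) : ℝ :=
  sInf {r : ℝ | 0 ≤ r ∧ ∃ x' : ℝ, circleProj x' = x ∧ circleProj (x' + r) = y}

/-- An invertible random dynamical system on the circle, in discrete or continuous time,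
driven by a stationary memoryless noise process. -/
structure RDS (Ω : Type) [m : MeasurableSpace Ω] where
  /-- the time set `𝕋⁺`: either `ℕ ∪ {0}` or `[0,∞)`, viewed inside `ℝ` -/
  T : Set ℝ
  T_cases : T = Set.range (fun n : ℕ => (n : ℝ)) ∨ T = Set.Ici (0 : ℝ)
  /-- the filtration -/
  F : ℝ → MeasurableSpace Ω
  F_le : ∀ t ∈ T, F t ≤ m
  F_mono : ∀ s ∈ T, ∀ t ∈ T, s ≤ t → F s ≤ F t
  /-- the probability measure -/
  P : Measure Ω
  P_prob : IsProbabilityMeasure P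
  /-- the time-shift maps on the noise space -/
  θ : ℝ → Ω → Ω
  θ_zero : θ 0 = id
  θ_add : ∀ s ∈ T, ∀ t ∈ T, θ (s + t) = θ t ∘ θ s
  θ_preserving : ∀ t ∈ T, MeasurePreserving (θ t) P P
  θ_adapted : ∀ s ∈ T, ∀ t ∈ T, @Measurable Ω Ω (F (s + t)) (F s) (θ t)
  θ_indep : ∀ t ∈ T, ∀ E A : Set Ω, MeasurableSet[F t] E →
    MeasurableSet[⨆ s ∈ T, F s] A → P (E ∩ θ t ⁻¹' A) = P E * P A
  /-- the random homeomorphisms -/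
  φ : ℝ → Ω → UnitAddCircle ≃ₜ UnitAddCircle
  φ_orient : ∀ t ∈ T, ∀ ω, OrientPreserving (φ t ω)
  φ_meas : ∀ t ∈ T, @Measurable (Ω × UnitAddCircle) UnitAddCircle
    ((F t).prod inferInstance) inferInstance (fun p => φ t p.1 p.2)
  φ_zero : ∀ ω, φ 0 ω = Homeomorph.refl UnitAddCircle
  φ_cocycle : ∀ s ∈ T, ∀ t ∈ T, ∀ ω x, φ (s + t) ω x = φ t (θ s ω) (φ s ω x)
  φ_cadlag_right : ∀ ω, ∀ t ∈ T, ∀ tn : ℕ → ℝ, (∀ n, tn n ∈ T) → Antitone tn →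
    Tendsto tn atTop (𝓝 t) → ∀ (xn : ℕ → UnitAddCircle) (x : UnitAddCircle),
      Tendsto xn atTop (𝓝 x) →
      Tendsto (fun n => φ (tn n) ω (xn n)) atTop (𝓝 (φ t ω x))
  /-- the left-limit maps -/
  φ_left_lim : ℝ → Ω → UnitAddCircle → UnitAddCircle
  φ_cadlag_left : ∀ ω, ∀ t ∈ T, ∀ tn : ℕ → ℝ, (∀ n, tn n ∈ T) → StrictMono tn →
    Tendsto tn atTop (𝓝 t) → ∀ (xn : ℕ → UnitAddCircle) (x : UnitAddCircle),
      Tendsto xn atTop (𝓝 x) →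
      Tendsto (fun n => φ (tn n) ω (xn n)) atTop (𝓝 (φ_left_lim t ω x))

/-- A probability measure on the circle is atomless if every singleton is null. -/
def Atomless (ρ : Measure UnitAddCircle) : Prop := ∀ x, ρ {x} = 0

/-- A measure on the circle has full support. -/
def FullSupport (ρ : Measure UnitAddCircle) : Prop :=
  ∀ U : Set UnitAddCircle, IsOpen U → U.Nonempty → 0 < ρ U

/-- The (topological) support of a measure on the circle. -/
def msupport (ρ : Measure UnitAddCircle) : Set UnitAddCircle :=
  {x | ∀ U : Set UnitAddCircle, IsOpen U → x ∈ U → 0 < ρ U}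

namespace RDS

variable {Ω : Type} [m : MeasurableSpace Ω] (S : RDS Ω)

/-- the future σ-algebra `𝓕₊ = σ(𝓕_t : t ∈ 𝕋⁺)`. -/
def Fplus : MeasurableSpace Ω := ⨆ t ∈ S.T, S.F t

/-- The filter "t → ∞ along the time set 𝕋⁺". -/
def tFilter : Filter ℝ := atTop ⊓ 𝓟 S.T

/-- two-point contractibility. -/
def Contractible : Prop := ∀ x y : UnitAddCircle, x ≠ y →
  0 < S.P {ω | ∃ t ∈ S.T, dist (S.φ t ω x) (S.φ t ω y) < dist x y}

/-- compressibility. -/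
def Compressible : Prop := ∀ x y : UnitAddCircle, x ≠ y →
  0 < S.P {ω | ∃ t ∈ S.T, dPlus (S.φ t ω x) (S.φ t ω y) < dPlus x y}

/-- `p` is a deterministic fixed point. -/
def DetFixedPoint (p : UnitAddCircle) : Prop :=
  ∀ᵐ ω ∂S.P, ∀ t ∈ S.T, S.φ t ω p = p

/-- `A` is forward-invariant. -/
def ForwardInvariant (A : Set UnitAddCircle) : Prop :=
  ∀ᵐ ω ∂S.P, ∀ t ∈ S.T, ⇑(S.φ t ω) '' A ⊆ A

/-- reverse-minimal dynamics: the only open forward-invariant sets are `∅` and `𝕊¹`. -/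
def ReverseMinimal : Prop :=
  ∀ A : Set UnitAddCircle, IsOpen A → S.ForwardInvariant A → A = ∅ ∨ A = Set.univ

/-- synchronisation. -/
def Synchronising : Prop := ∀ x y : UnitAddCircle,
  S.P {ω | Tendsto (fun t => dist (S.φ t ω x) (S.φ t ω y)) S.tFilter (𝓝 0)} = 1

/-- everywhere local stability. -/
def EverywhereLocallyStable : Prop := ∀ x : UnitAddCircle,
  S.P {ω | ∃ U : Set UnitAddCircle, IsOpen U ∧ x ∈ U ∧
    Tendsto (fun t => volume (⇑(S.φ t ω) '' U)) S.tFilter (𝓝 0)} = 1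

/-- stable synchronisation. -/
def StablySynchronising : Prop := S.Synchronising ∧ S.EverywhereLocallyStable

/-- `ρ` is reverse-stationary: `ρ(A) = ∫ ρ(φ(t,ω)A) ℙ(dω)` for all `t ∈ 𝕋⁺`, Borel `A`. -/
def ReverseStationary (ρ : Measure UnitAddCircle) : Prop :=
  ∀ t ∈ S.T, ∀ A : Set UnitAddCircle, MeasurableSet A →
    ρ A = ∫⁻ ω, ρ (⇑(S.φ t ω) '' A) ∂S.P

/-- `r` is a crack point of `ω`. -/
def CrackPoint (ω : Ω) (r : UnitAddCircle) : Prop :=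
  ∀ G : Set UnitAddCircle, IsClosed G → r ∉ G →
    Tendsto (fun t => volume (⇑(S.φ t ω) '' G)) S.tFilter (𝓝 0)

/-- the set of contractive sample points. -/
def Ωc : Set Ω := {ω | ∃ r, S.CrackPoint ω r}

/-- the reverse transition probabilities `φ̄ₓᵗ(A) = ℙ(ω : φ(t,ω)⁻¹(x) ∈ A)`. -/
def revTrans (t : ℝ) (x : UnitAddCircle) (A : Set UnitAddCircle) : ℝ≥0∞ :=
  S.P {ω | (S.φ t ω).symm x ∈ A}

/-- the forward transition probabilities `φₓᵗ(A) = ℙ(ω : φ(t,ω)x ∈ A)`. -/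
def fwdTrans (t : ℝ) (x : UnitAddCircle) (A : Set UnitAddCircle) : ℝ≥0∞ :=
  S.P {ω | S.φ t ω x ∈ A}

/-- `ρ` is stationary for a transition family `ν`. -/
def StationaryFor (ν : ℝ → UnitAddCircle → Set UnitAddCircle → ℝ≥0∞)
    (ρ : Measure UnitAddCircle) : Prop :=
  ∀ t ∈ S.T, ∀ A : Set UnitAddCircle, MeasurableSet A → ρ A = ∫⁻ x, ν t x A ∂ρ

/-- `ρ` is ergodic for a transition family `ν`. -/
def ErgodicFor (ν : ℝ → UnitAddCircle → Set UnitAddCircle → ℝ≥0∞)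
    (ρ : Measure UnitAddCircle) : Prop :=
  S.StationaryFor ν ρ ∧ ∀ A : Set UnitAddCircle, MeasurableSet A →
    (∀ t ∈ S.T, ∀ᵐ x ∂ρ, x ∈ A → ν t x A = 1) → ρ A = 0 ∨ ρ A = 1

end RDS

theorem aux_fubini {Ω Ω1 Ω2 : Type} [MeasurableSpace Ω] [MeasurableSpace Ω1] [MeasurableSpace Ω2]
    (P : Measure Ω) [IsProbabilityMeasure P] (X : Ω → Ω1) (Y : Ω → Ω2)
    (hX : Measurable X) (hY : Measurable Y)
    (hind : ∀ E A, MeasurableSet E → MeasurableSet A →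
      P (X ⁻¹' E ∩ Y ⁻¹' A) = P (X ⁻¹' E) * P (Y ⁻¹' A))
    (D : Set (Ω1 × Ω2)) (hD : MeasurableSet D) :
    P {ω | (X ω, Y ω) ∈ D} = ∫⁻ ω, P {ω' | (X ω, Y ω') ∈ D} ∂P ∧
    Measurable (fun ω => P {ω' | (X ω, Y ω') ∈ D}) := by
  have h1 : P.map (fun ω => (X ω, Y ω)) = (P.map X).prod (P.map Y) := by
    rw [← ProbabilityTheory.indepFun_iff_map_prod_eq_prod_map_map hX.aemeasurable hY.aemeasurable,
      ProbabilityTheory.indepFun_iff_measure_inter_preimage_eq_mul]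
    exact hind
  have : IsProbabilityMeasure (P.map Y) := Measure.isProbabilityMeasure_map hY.aemeasurable
  have h2 : ∀ a, (P.map Y) (Prod.mk a ⁻¹' D) = P {ω' | (a, Y ω') ∈ D} := fun a => by
    rw [Measure.map_apply hY (measurable_prodMk_left hD)]; rfl
  have h3 : Measurable (fun a => P {ω' | (a, Y ω') ∈ D}) := by
    simp_rw [← h2]
    exact measurable_measure_prodMk_left hD
  refine ⟨?_, h3.comp hX⟩
  have h4 : P {ω | (X ω, Y ω) ∈ D} = P.map (fun ω => (X ω, Y ω)) D := by
    rw [Measure.map_apply (hX.prodMk hY) hD]; rfl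
  rw [h4, h1, Measure.prod_apply hD]
  simp_rw [h2]
  rw [lintegral_map h3 hX]

theorem aux_image_meas {Ω1 : Type} [MeasurableSpace Ω1]
    (f : Ω1 → UnitAddCircle ≃ₜ UnitAddCircle)
    (hf : Measurable (fun p : Ω1 × UnitAddCircle => f p.1 p.2))
    (V : Set UnitAddCircle) (hV : IsOpen V) :
    Measurable (fun ω => volume (⇑(f ω) '' V)) := by
  obtain ⟨D, hDV, hDc, hDd⟩ := (TopologicalSpace.IsSeparable.of_separableSpace Vᶜ).exists_countable_dense_subset
  have key : MeasurableSet {p : Ω1 × UnitAddCircle | p.2 ∈ ⇑(f p.1) '' V} := by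
    have : {p : Ω1 × UnitAddCircle | p.2 ∈ ⇑(f p.1) '' V} =
        (⋂ n : ℕ, ⋃ x ∈ D, {p : Ω1 × UnitAddCircle | dist (f p.1 x) p.2 < 1 / ((n : ℝ) + 1)})ᶜ := by
      ext ⟨ω, y⟩
      have e1 : y ∈ ⇑(f ω) '' V ↔ y ∉ ⇑(f ω) '' Vᶜ := by
        rw [Set.image_compl_eq (f ω).bijective]; simp
      have e2 : y ∈ ⇑(f ω) '' Vᶜ ↔ y ∈ closure (⇑(f ω) '' D) := by
        have hc : ⇑(f ω) '' Vᶜ = closure (⇑(f ω) '' D) := by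
          rw [← (f ω).image_closure]
          congr 1
          exact (hDd.antisymm (closure_minimal hDV hV.isClosed_compl))
        rw [hc]
      simp only [Set.mem_ofPred_eq, e1, e2, Set.mem_compl_iff, Set.mem_iInter, Set.mem_iUnion]
      rw [not_iff_not, Metric.mem_closure_iff]
      constructor
      · intro h n
        obtain ⟨b, ⟨x, hx, rfl⟩, hb⟩ := h (1 / ((n : ℝ) + 1)) Nat.one_div_pos_of_nat
        exact ⟨x, hx, by rwa [dist_comm]⟩
      · intro h ε hε
        obtain ⟨n, hn⟩ := exists_nat_one_div_lt hε
        obtain ⟨x, hx, hb⟩ := h n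
        exact ⟨_, ⟨x, hx, rfl⟩, by rw [dist_comm]; exact hb.trans hn⟩
    rw [this]
    refine (MeasurableSet.iInter fun n => MeasurableSet.biUnion hDc fun x _ => ?_).compl
    refine measurableSet_lt (Measurable.dist ?_ measurable_snd) measurable_const
    exact hf.comp (measurable_fst.prodMk measurable_const)
  have e : ∀ ω, Prod.mk ω ⁻¹' {p : Ω1 × UnitAddCircle | p.2 ∈ ⇑(f p.1) '' V} = ⇑(f ω) '' V := by
    intro ω
    ext y
    rw [Set.mem_preimage, Set.mem_ofPred_eq]
  have h := measurable_measure_prodMk_left (ν := (volume : Measure UnitAddCircle)) key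
  simp only [e] at h
  exact h

namespace RDS

variable {Ω : Type} [m : MeasurableSpace Ω] (S : RDS Ω)

theorem aux_nat_mem (n : ℕ) : (n : ℝ) ∈ S.T := by
  rcases S.T_cases with h | h <;> rw [h]
  · exact ⟨n, rfl⟩
  · exact Set.mem_Ici.2 (Nat.cast_nonneg n)

theorem aux_add_mem {s t : ℝ} (hs : s ∈ S.T) (ht : t ∈ S.T) : s + t ∈ S.T := by
  rcases S.T_cases with h | h <;> rw [h] at hs ht ⊢
  · obtain ⟨a, rfl⟩ := hs
    obtain ⟨b, rfl⟩ := ht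
    exact ⟨a + b, by simp⟩
  · exact Set.mem_Ici.2 (add_nonneg (Set.mem_Ici.1 hs) (Set.mem_Ici.1 ht))

theorem aux_sub_mem {s t : ℝ} (hs : s ∈ S.T) (ht : t ∈ S.T) (h : s ≤ t) : t - s ∈ S.T := by
  rcases S.T_cases with h' | h' <;> rw [h'] at hs ht ⊢
  · obtain ⟨a, rfl⟩ := hs
    obtain ⟨b, rfl⟩ := ht
    have hab : a ≤ b := by simpa using h
    exact ⟨b - a, by simp [Nat.cast_sub hab]⟩
  · exact Set.mem_Ici.2 (sub_nonneg.2 h)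

instance aux_neBot : S.tFilter.NeBot := by
  have h : Tendsto (fun n : ℕ => (n : ℝ)) atTop S.tFilter :=
    tendsto_inf.2 ⟨tendsto_natCast_atTop_atTop,
      tendsto_principal.2 (Eventually.of_forall fun n => S.aux_nat_mem n)⟩
  exact h.neBot

theorem aux_seq : ∃ Q : Set ℝ, Q.Countable ∧ Q ⊆ S.T ∧ ∀ t ∈ S.T, ∃ u : ℕ → ℝ,
    Antitone u ∧ (∀ n, u n ∈ Q ∧ t ≤ u n) ∧ Tendsto u atTop (𝓝 t) := by
  rcases S.T_cases with h | h
  · refine ⟨S.T, ?_, subset_rfl, fun t ht => ⟨fun _ => t, antitone_const, fun _ => ⟨ht, le_rfl⟩,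
      tendsto_const_nhds⟩⟩
    rw [h]
    exact Set.countable_range _
  · refine ⟨Set.range ((↑) : ℚ → ℝ) ∩ S.T, (Set.countable_range _).mono Set.inter_subset_left,
      Set.inter_subset_right, fun t ht => ?_⟩
    have hd : Dense (Set.range ((↑) : ℚ → ℝ)) := Rat.denseRange_cast
    obtain ⟨u, hu, hm, hl⟩ := hd.exists_seq_strictAnti_tendsto t
    refine ⟨u, hu.antitone, fun n => ⟨⟨(hm n).2, ?_⟩, le_of_lt (Set.mem_Ioi.1 (hm n).1)⟩, hl⟩
    rw [h] at ht ⊢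
    exact Set.mem_Ici.2 (le_trans (Set.mem_Ici.1 ht) (le_of_lt (Set.mem_Ioi.1 (hm n).1)))

theorem aux_unique {ω : Ω} {x y : UnitAddCircle} (hx : S.CrackPoint ω x) (hy : S.CrackPoint ω y) :
    x = y := by
  by_contra hne
  obtain ⟨U, V, hU, hV, hxU, hyV, hd⟩ := t2_separation hne
  have h1 := (hx Uᶜ hU.isClosed_compl (by simpa using hxU)).add
    (hy Vᶜ hV.isClosed_compl (by simpa using hyV))
  have h2 : ∀ t, (1 : ℝ≥0∞) ≤ volume (⇑(S.φ t ω) '' Uᶜ) + volume (⇑(S.φ t ω) '' Vᶜ) := by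
    intro t
    refine le_trans ?_ (measure_union_le _ _)
    rw [← Set.image_union, ← Set.compl_inter, hd.inter_eq, Set.compl_empty, Set.image_univ,
      (S.φ t ω).surjective.range_eq]
    simp
  have h3 := ge_of_tendsto' h1 h2
  simp at h3

theorem aux_tendsto_shift {t : ℝ} (ht : t ∈ S.T) (f : ℝ → ℝ≥0∞) :
    Tendsto f S.tFilter (𝓝 0) ↔ Tendsto (fun s => f (t + s)) S.tFilter (𝓝 0) := by
  have hT : ∀ᶠ s in S.tFilter, s ∈ S.T := mem_inf_of_right (mem_principal_self _)
  have hle : S.tFilter ≤ atTop := inf_le_left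
  constructor
  · intro h
    refine h.comp (tendsto_inf.2 ⟨?_, tendsto_principal.2 ?_⟩)
    · exact (tendsto_atTop_add_const_left _ t tendsto_id).mono_left hle
    · exact hT.mono fun s hs => S.aux_add_mem ht hs
  · intro h
    have h' : Tendsto (fun s => s - t) S.tFilter S.tFilter := by
      refine tendsto_inf.2 ⟨?_, tendsto_principal.2 ?_⟩
      · simp only [sub_eq_add_neg]
        exact (tendsto_atTop_add_const_right _ (-t) tendsto_id).mono_left hle
      · filter_upwards [hT, hle (eventually_ge_atTop t)] with s hs hst
        exact S.aux_sub_mem ht hs hst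
    have := h.comp h'
    simpa [Function.comp_def] using this

theorem aux_shift {t : ℝ} (ht : t ∈ S.T) (ω : Ω) (p : UnitAddCircle) :
    S.CrackPoint ω p ↔ S.CrackPoint (S.θ t ω) (S.φ t ω p) := by
  have hT : ∀ᶠ s in S.tFilter, s ∈ S.T := mem_inf_of_right (mem_principal_self _)
  have key : ∀ G : Set UnitAddCircle,
      Tendsto (fun s => volume (⇑(S.φ s ω) '' G)) S.tFilter (𝓝 0) ↔
      Tendsto (fun s => volume (⇑(S.φ s (S.θ t ω)) '' (⇑(S.φ t ω) '' G))) S.tFilter (𝓝 0) := by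
    intro G
    rw [S.aux_tendsto_shift ht]
    refine tendsto_congr' (hT.mono fun s hs => ?_)
    simp only
    congr 1
    rw [Set.image_image]
    exact Set.image_congr fun x _ => S.φ_cocycle t ht s hs ω x
  constructor
  · intro h G hG hp
    have := (key (⇑(S.φ t ω) ⁻¹' G)).1 (h _ (hG.preimage (S.φ t ω).continuous) hp)
    rwa [Set.image_preimage_eq _ (S.φ t ω).surjective] at this
  · intro h G hG hp
    refine (key G).2 (h _ ((S.φ t ω).isClosedMap _ hG) ?_)
    rwa [(S.φ t ω).injective.mem_set_image]

theorem aux_Fplus_le : S.Fplus ≤ m := iSup₂_le fun t ht => S.F_le t ht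

theorem aux_inv_tendsto (ω : Ω) {t : ℝ} (ht : t ∈ S.T) (u : ℕ → ℝ) (hu : Antitone u)
    (huT : ∀ n, u n ∈ S.T) (hl : Tendsto u atTop (𝓝 t)) (y : UnitAddCircle) :
    Tendsto (fun n => (S.φ (u n) ω).symm y) atTop (𝓝 ((S.φ t ω).symm y)) := by
  refine tendsto_of_subseq_tendsto fun ns hns => ?_
  obtain ⟨ks, hks, hkm⟩ := strictMono_subseq_of_tendsto_atTop hns
  obtain ⟨x, -, js, hjs, hx⟩ := isCompact_univ.tendsto_subseq
    (x := fun n => (S.φ (u (ns (ks n))) ω).symm y) (fun _ => Set.mem_univ _)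
  refine ⟨ks ∘ js, ?_⟩
  have hm : StrictMono (fun n => ns (ks (js n))) := hkm.comp hjs
  have := S.φ_cadlag_right ω t ht (fun n => u (ns (ks (js n)))) (fun n => huT _)
    (fun a b hab => hu (hm.monotone hab)) (hl.comp hm.tendsto_atTop) _ x hx
  simp only [Function.comp_def, Homeomorph.apply_symm_apply] at this
  have hy : y = S.φ t ω x := tendsto_nhds_unique tendsto_const_nhds this
  have hx' : x = (S.φ t ω).symm y := by rw [hy, Homeomorph.symm_apply_apply]
  rw [← hx']
  exact hx

theorem aux_lsc (ω : Ω) {t : ℝ} (ht : t ∈ S.T) (u : ℕ → ℝ) (hu : Antitone u)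
    (huT : ∀ n, u n ∈ S.T) (hl : Tendsto u atTop (𝓝 t)) (V : Set UnitAddCircle) (hV : IsOpen V)
    (c : ℝ≥0∞) (hc : ∀ n, volume (⇑(S.φ (u n) ω) '' V) ≤ c) : volume (⇑(S.φ t ω) '' V) ≤ c := by
  have hopen : ∀ s, MeasurableSet (⇑(S.φ s ω) '' V) := fun s =>
    ((S.φ s ω).isOpenMap V hV).measurableSet
  have h1 : ∀ y, (⇑(S.φ t ω) '' V).indicator (1 : UnitAddCircle → ℝ≥0∞) y ≤
      liminf (fun n => (⇑(S.φ (u n) ω) '' V).indicator (1 : UnitAddCircle → ℝ≥0∞) y) atTop := by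
    intro y
    by_cases hy : y ∈ ⇑(S.φ t ω) '' V
    · rw [Set.indicator_of_mem hy]
      have hyV : (S.φ t ω).symm y ∈ V := by
        obtain ⟨x, hx, rfl⟩ := hy
        simpa using hx
      refine le_liminf_of_le (by isBoundedDefault) ?_
      filter_upwards [(S.aux_inv_tendsto ω ht u hu huT hl y).eventually (hV.mem_nhds hyV)] with n hn
      rw [Set.indicator_of_mem]
      exact ⟨_, hn, by simp⟩
    · rw [Set.indicator_of_notMem hy]
      exact zero_le
  calc volume (⇑(S.φ t ω) '' V)
      = ∫⁻ y, (⇑(S.φ t ω) '' V).indicator (1 : UnitAddCircle → ℝ≥0∞) y :=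
        (lintegral_indicator_one (hopen t)).symm
    _ ≤ ∫⁻ y, liminf (fun n => (⇑(S.φ (u n) ω) '' V).indicator
          (1 : UnitAddCircle → ℝ≥0∞) y) atTop := lintegral_mono h1
    _ ≤ liminf (fun n => ∫⁻ y, (⇑(S.φ (u n) ω) '' V).indicator
          (1 : UnitAddCircle → ℝ≥0∞) y) atTop :=
        lintegral_liminf_le fun n => measurable_one.indicator (hopen _)
    _ ≤ c := by
        simp_rw [lintegral_indicator_one (hopen _)]
        refine (liminf_le_liminf (Eventually.of_forall hc)).trans ?_
        simp

theorem aux_tendsto_meas (V : Set UnitAddCircle) (hV : IsOpen V) :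
    MeasurableSet[S.Fplus] {ω | Tendsto (fun t => volume (⇑(S.φ t ω) '' V)) S.tFilter (𝓝 0)} := by
  obtain ⟨Q, hQc, hQT, hQ⟩ := S.aux_seq
  have : {ω | Tendsto (fun t => volume (⇑(S.φ t ω) '' V)) S.tFilter (𝓝 0)} =
      ⋂ k : ℕ, ⋃ N : ℕ, ⋂ q ∈ Q, {ω | (N : ℝ) ≤ q →
        volume (⇑(S.φ q ω) '' V) ≤ ((k : ℝ≥0∞) + 1)⁻¹} := by
    ext ω
    simp only [Set.mem_ofPred_eq, Set.mem_iInter, Set.mem_iUnion]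
    rw [ENNReal.tendsto_nhds_zero]
    constructor
    · intro h k
      have h1 := h ((k : ℝ≥0∞) + 1)⁻¹ (ENNReal.inv_pos.2 (by finiteness))
      rw [tFilter, eventually_inf_principal, eventually_atTop] at h1
      obtain ⟨a, ha⟩ := h1
      obtain ⟨N, hN⟩ := exists_nat_ge a
      exact ⟨N, fun q hq hNq => ha q (hN.trans hNq) (hQT hq)⟩
    · intro h ε hε
      obtain ⟨k, hk⟩ := ENNReal.exists_inv_nat_lt hε.ne'
      obtain ⟨N, hN⟩ := h k
      rw [tFilter, eventually_inf_principal, eventually_atTop]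
      refine ⟨N, fun t hNt ht => ?_⟩
      obtain ⟨u, hu, hm, hl⟩ := hQ t ht
      refine le_trans (S.aux_lsc ω ht u hu (fun n => hQT (hm n).1) hl V hV _
        fun n => hN _ (hm n).1 (hNt.trans (hm n).2)) (le_trans ?_ hk.le)
      exact ENNReal.inv_le_inv.2 le_self_add
  rw [this]
  refine MeasurableSet.iInter fun k => MeasurableSet.iUnion fun N => MeasurableSet.biInter hQc
    fun q hq => ?_
  by_cases hNq : (N : ℝ) ≤ q
  · simp only [hNq, forall_const]
    have h1 := @aux_image_meas Ω (S.F q) (S.φ q) (S.φ_meas q (hQT hq)) V hV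
    have h2 : MeasurableSet[S.F q] {ω | volume (⇑(S.φ q ω) '' V) ≤ ((k : ℝ≥0∞) + 1)⁻¹} :=
      h1 measurableSet_Iic
    exact (le_iSup₂ (f := fun t (_ : t ∈ S.T) => S.F t) q (hQT hq)) _ h2
  · simp [hNq]

theorem aux_crack_meas :
    MeasurableSet[S.Fplus.prod (inferInstance : MeasurableSpace UnitAddCircle)]
      {p : Ω × UnitAddCircle | S.CrackPoint p.1 p.2} := by
  have hb := TopologicalSpace.isBasis_countableBasis UnitAddCircle
  have : {p : Ω × UnitAddCircle | S.CrackPoint p.1 p.2} =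
      ⋂ U ∈ TopologicalSpace.countableBasis UnitAddCircle,
        ((Prod.snd ⁻¹' U)ᶜ ∪ Prod.fst ⁻¹' {ω | Tendsto
          (fun t => volume (⇑(S.φ t ω) '' (closure U)ᶜ)) S.tFilter (𝓝 0)}) := by
    ext ⟨ω, y⟩
    simp only [Set.mem_ofPred_eq, Set.mem_iInter, Set.mem_union, Set.mem_compl_iff,
      Set.mem_preimage, ← imp_iff_not_or]
    constructor
    · intro h U hU hy
      refine tendsto_of_tendsto_of_tendsto_of_le_of_le tendsto_const_nhds
        (h Uᶜ (hb.isOpen hU).isClosed_compl (by simpa using hy)) (fun _ => zero_le) fun t => ?_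
      exact measure_mono (Set.image_mono (Set.compl_subset_compl.2 subset_closure))
    · intro h G hG hy
      obtain ⟨U, hU, hyU, hUG⟩ := hb.exists_closure_subset (hG.isOpen_compl.mem_nhds hy)
      refine tendsto_of_tendsto_of_tendsto_of_le_of_le tendsto_const_nhds
        (h U hU hyU) (fun _ => zero_le) fun t => ?_
      exact measure_mono (Set.image_mono (Set.subset_compl_comm.1 hUG))
  rw [this]
  refine @MeasurableSet.biInter _ _ (S.Fplus.prod inferInstance) _ _
    (TopologicalSpace.countable_countableBasis _) fun U hU => ?_
  refine @MeasurableSet.union _ (S.Fplus.prod inferInstance) _ _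
    (@MeasurableSet.compl _ _ (S.Fplus.prod inferInstance)
      (@measurable_snd _ _ S.Fplus _ _ (hb.isOpen hU).measurableSet))
    (@measurable_fst _ _ S.Fplus _ _ ?_)
  exact S.aux_tendsto_meas _ isClosed_closure.isOpen_compl

theorem aux_E_meas (p : UnitAddCircle) : MeasurableSet[S.Fplus] {ω | S.CrackPoint ω p} := by
  have h : @Measurable _ _ S.Fplus (S.Fplus.prod inferInstance)
      (fun ω : Ω => (ω, p)) := @measurable_prodMk_right _ _ S.Fplus _ p
  exact h S.aux_crack_meas

theorem aux_key {t : ℝ} (ht : t ∈ S.T) (p : UnitAddCircle) (B : Set Ω)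
    (hB : MeasurableSet[S.F t] B) :
    S.P (B ∩ {ω | S.CrackPoint ω p}) =
      ∫⁻ ω in B, S.P {ω' | S.CrackPoint ω' (S.φ t ω p)} ∂S.P ∧
    Measurable (fun ω => S.P {ω' | S.CrackPoint ω' (S.φ t ω p)}) := by
  have := S.P_prob
  have hθ := S.θ_preserving t ht
  have hind : ∀ E A, MeasurableSet[S.F t] E → MeasurableSet[S.Fplus] A →
      S.P (id ⁻¹' E ∩ S.θ t ⁻¹' A) = S.P (id ⁻¹' E) * S.P (S.θ t ⁻¹' A) := by
    intro E A hE hA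
    rw [hθ.measure_preimage (S.aux_Fplus_le A hA).nullMeasurableSet]
    exact S.θ_indep t ht E A hE hA
  have hX : @Measurable Ω Ω m (S.F t) id := measurable_id'' (S.F_le t ht)
  have hY : @Measurable Ω Ω m S.Fplus (S.θ t) := hθ.measurable.mono le_rfl S.aux_Fplus_le
  have hf : @Measurable (Ω × Ω) (Ω × UnitAddCircle) ((S.F t).prod S.Fplus)
      (S.Fplus.prod inferInstance) (fun q => (q.2, S.φ t q.1 p)) := by
    refine @Measurable.prodMk _ ((S.F t).prod S.Fplus) _ _ S.Fplus _ _ _ ?_ ?_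
    · exact @measurable_snd _ _ (S.F t) S.Fplus
    · have h1 : @Measurable Ω (Ω × UnitAddCircle) (S.F t) ((S.F t).prod inferInstance)
          (fun ω => (ω, p)) := @measurable_prodMk_right _ _ (S.F t) _ p
      have h2 := @Measurable.comp _ _ _ (S.F t) ((S.F t).prod inferInstance) _ _ _ (S.φ_meas t ht) h1
      exact @Measurable.comp _ _ _ ((S.F t).prod S.Fplus) (S.F t) _ _ _ h2
        (@measurable_fst _ _ (S.F t) S.Fplus)
  have hC : ∀ B : Set Ω, MeasurableSet[S.F t] B → MeasurableSet[(S.F t).prod S.Fplus]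
      {q : Ω × Ω | q.1 ∈ B ∧ S.CrackPoint q.2 (S.φ t q.1 p)} := by
    intro B hB
    exact @MeasurableSet.inter _ ((S.F t).prod S.Fplus) _ _
      ((@measurable_fst _ _ (S.F t) S.Fplus) hB) (hf S.aux_crack_meas)
  have hfub := fun B hB => @aux_fubini Ω Ω Ω m (S.F t) S.Fplus S.P _ id (S.θ t) hX hY hind _ (hC B hB)
  have hpre : ∀ y, S.P {ω' | S.CrackPoint (S.θ t ω') y} = S.P {ω' | S.CrackPoint ω' y} :=
    fun y => hθ.measure_preimage (S.aux_Fplus_le _ (S.aux_E_meas y)).nullMeasurableSet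
  refine ⟨?_, ?_⟩
  · have h1 := (hfub B hB).1
    have h2 : {ω | (id ω, S.θ t ω) ∈ {q : Ω × Ω | q.1 ∈ B ∧ S.CrackPoint q.2 (S.φ t q.1 p)}} =
        B ∩ {ω | S.CrackPoint ω p} := by
      ext ω
      simp only [id, Set.mem_ofPred_eq, Set.mem_inter_iff, ← S.aux_shift ht]
    rw [h2] at h1
    rw [h1, ← lintegral_indicator (S.F_le t ht B hB)]
    refine lintegral_congr fun ω => ?_
    by_cases hω : ω ∈ B
    · rw [Set.indicator_of_mem hω, ← hpre]
      simp [hω]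
    · rw [Set.indicator_of_notMem hω]
      simp [hω]
  · have h1 := (hfub Set.univ (@MeasurableSet.univ _ (S.F t))).2
    simpa [hpre] using h1

theorem aux_zero_one (E : Set Ω) (hE : MeasurableSet[S.Fplus] E)
    (h : ∀ t ∈ S.T, ∀ B, MeasurableSet[S.F t] B → S.P (B ∩ E) = S.P B * S.P E) :
    S.P E = 0 ∨ S.P E = 1 := by
  have := S.P_prob
  have hEm : MeasurableSet E := S.aux_Fplus_le E hE
  have h1 : ∀ t : S.T, ProbabilityTheory.Indep (S.F t) (MeasurableSpace.generateFrom {E}) S.P := by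
    intro t
    refine ProbabilityTheory.IndepSets.indep (S.F_le t t.2)
      (MeasurableSpace.generateFrom_le (by simpa using hEm))
      (@MeasurableSpace.isPiSystem_measurableSet _ (S.F t)) (IsPiSystem.singleton E)
      (@MeasurableSpace.generateFrom_measurableSet _ (S.F t)).symm rfl ?_
    rw [ProbabilityTheory.IndepSets_iff]
    intro B A hB hA
    rw [Set.mem_singleton_iff.1 hA]
    exact h t t.2 B hB
  have h2 := ProbabilityTheory.indep_iSup_of_directed_le h1 (fun t => S.F_le t t.2)
    (MeasurableSpace.generateFrom_le (by simpa using hEm)) (by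
      intro a b
      rcases le_total a.1 b.1 with hab | hab
      · exact ⟨b, S.F_mono _ a.2 _ b.2 hab, le_rfl⟩
      · exact ⟨a, le_rfl, S.F_mono _ b.2 _ a.2 hab⟩)
  rw [iSup_subtype, ProbabilityTheory.Indep_iff] at h2
  have h3 := h2 E E hE (MeasurableSpace.measurableSet_generateFrom rfl)
  rw [Set.inter_self] at h3
  by_cases h0 : S.P E = 0
  · exact Or.inl h0
  · right
    exact (ENNReal.mul_eq_left h0 (measure_ne_top _ _)).1 h3.symm

end RDS

/-- if `ℙ(Ω_c) = 1` then either the law of the crack point is atomless, or the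
crack point is almost surely a deterministic fixed point. -/
theorem crackPoint_law_atomless_or_deterministic
    {Ω : Type} [MeasurableSpace Ω] (S : RDS Ω) (hP : S.P S.Ωc = 1)
    (r : Ω → UnitAddCircle) (hr : ∀ ω ∈ S.Ωc, S.CrackPoint ω (r ω)) :
    (∀ x : UnitAddCircle, S.P {ω | ω ∈ S.Ωc ∧ r ω = x} = 0) ∨
    (∃ p : UnitAddCircle, S.DetFixedPoint p ∧ S.P {ω | ω ∈ S.Ωc ∧ r ω = p} = 1) := by
  have := S.P_prob
  have hset : ∀ x, {ω | ω ∈ S.Ωc ∧ r ω = x} = {ω | S.CrackPoint ω x} := by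
    intro x
    ext ω
    constructor
    · rintro ⟨h, rfl⟩
      exact hr ω h
    · intro h
      have hc : ω ∈ S.Ωc := ⟨x, h⟩
      exact ⟨hc, S.aux_unique (hr ω hc) h⟩
  simp_rw [hset]
  by_cases hall : ∀ x, S.P {ω | S.CrackPoint ω x} = 0
  · exact Or.inl hall
  right
  push Not at hall
  obtain ⟨x₀, hx₀⟩ := hall
  have hmeas : ∀ x, MeasurableSet {ω | S.CrackPoint ω x} :=
    fun x => S.aux_Fplus_le _ (S.aux_E_meas x)
  have hfin := Measure.finite_const_le_meas_of_disjoint_iUnion S.P (pos_iff_ne_zero.2 hx₀) hmeas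
    (fun x y hxy => Set.disjoint_left.2 fun ω h1 h2 => hxy (S.aux_unique h1 h2))
    (measure_ne_top _ _)
  obtain ⟨p, hp, hmax⟩ := Set.exists_max_image _ (fun x => S.P {ω | S.CrackPoint ω x}) hfin
    ⟨x₀, (le_refl _ : S.P {ω | S.CrackPoint ω x₀} ≤ S.P {ω | S.CrackPoint ω x₀})⟩
  have hmax' : ∀ y, S.P {ω | S.CrackPoint ω y} ≤ S.P {ω | S.CrackPoint ω p} := by
    intro y
    by_cases hy : S.P {ω | S.CrackPoint ω x₀} ≤ S.P {ω | S.CrackPoint ω y}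
    · exact hmax y hy
    · exact (le_of_not_ge hy).trans hp
  have hae : ∀ t ∈ S.T, ∀ᵐ ω ∂S.P, S.P {ω' | S.CrackPoint ω' (S.φ t ω p)} =
      S.P {ω' | S.CrackPoint ω' p} := by
    intro t ht
    have h1 := (S.aux_key ht p Set.univ (@MeasurableSet.univ _ (S.F t))).1
    rw [Set.univ_inter, Measure.restrict_univ] at h1
    refine ae_eq_of_ae_le_of_lintegral_le (Eventually.of_forall fun ω => hmax' _) ?_
      aemeasurable_const ?_
    · rw [← h1]
      exact measure_ne_top _ _
    · rw [← h1]
      simp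
  have h01 : S.P {ω | S.CrackPoint ω p} = 1 := by
    refine (S.aux_zero_one _ (S.aux_E_meas p) fun t ht B hB => ?_).resolve_left ?_
    · rw [(S.aux_key ht p B hB).1, lintegral_congr_ae (ae_restrict_of_ae (hae t ht))]
      simp [mul_comm]
    · exact ((pos_iff_ne_zero.2 hx₀).trans_le hp).ne'
  refine ⟨p, ?_, h01⟩
  have hfix : ∀ t ∈ S.T, ∀ᵐ ω ∂S.P, S.φ t ω p = p := by
    intro t ht
    filter_upwards [hae t ht] with ω hω
    rw [h01] at hω
    have a1 : ∀ᵐ ω' ∂S.P, S.CrackPoint ω' p := (prob_compl_eq_zero_iff (hmeas p)).2 h01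
    have a2 : ∀ᵐ ω' ∂S.P, S.CrackPoint ω' (S.φ t ω p) :=
      (prob_compl_eq_zero_iff (hmeas _)).2 hω
    obtain ⟨ω', b1, b2⟩ := (a1.and a2).exists
    exact S.aux_unique b2 b1
  obtain ⟨Q, hQc, hQT, hQ⟩ := S.aux_seq
  have hQfix : ∀ᵐ ω ∂S.P, ∀ q ∈ Q, S.φ q ω p = p :=
    (ae_ball_iff hQc).2 fun q hq => hfix q (hQT hq)
  filter_upwards [hQfix] with ω hω t ht
  obtain ⟨u, hu, hm, hl⟩ := hQ t ht
  have h1 := S.φ_cadlag_right ω t ht u (fun n => hQT (hm n).1) hu hl (fun _ => p) p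
    tendsto_const_nhds
  simp only [fun n => hω (u n) (hm n).1] at h1
  exact (tendsto_nhds_unique tendsto_const_nhds h1).symm
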